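/- Let A be a finitely generated commutative ring (finitely generated as a ℤ-algebra) that is reduced (has no nonzero nilpotent elements) and whose underlying additive group has no torsion. Then the group Aut(A) of ring automorphisms of A is virtually torsion free. -/

import Mathlib

/-!
For an ideal `I` let `H(I)` be the group of automorphisms of `A` inducing the identity on `A ⧸ I`.
If `A ⧸ I` is finite then `H(I)` has finite index, because a finitely generated ring has only
finitely many homomorphisms to a given finite ring (`congruenceSubgroup_index_ne_zero`).

Let `m` be a maximal ideal and let `h ∈ H(m ^ 2)` have prime order `q ∉ m`. Then `h - 1` maps
`m ^ k` into `m ^ (k + 1)` for every `k`. If `(h - 1) A ⊆ m ^ n` with `n ≥ 1`, then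
`h ^ q = 1` gives `q • (h - 1) a ∈ m ^ (n + 1)`, and `q` is invertible modulo `m ^ (n + 1)`; so
`(h - 1) A ⊆ ⋂ m ^ n` (`sub_mem_pow_of_pow_eq_one`). By Krull's intersection theorem this
intersection lies in every prime `P ⊆ m` (`mem_of_forall_mem_pow`).

Since `A` is reduced without additive torsion, its minimal primes `P` contain no positive integer.
As `A` is a Jacobson ring whose maximal ideals have finite residue fields, above each such `P` there
are two maximal ideals with different residue characteristics (`exists_two_maximal`), so that at
least one of them avoids any given prime `q`. Intersecting the groups `H(m ^ 2)` over these finitely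
many `m` gives a finite index subgroup, and each of its elements `h` of prime order satisfies
`(h - 1) A ⊆ ⋂ P = 0`. Hence the subgroup is torsion free.
-/

/-! ### Maximal ideals of finitely generated rings -/

/-- Nonzero primes of `ℤ` are maximal, and a nonzero integer `x` avoids the maximal ideal `(p)` for
any prime `p > |x|`. -/
theorem isJacobsonRing_int : IsJacobsonRing ℤ := by
  rw [isJacobsonRing_iff_prime_eq]
  intro P hP
  by_cases h0 : P = ⊥
  · subst h0
    rw [Ideal.eq_jacobson_iff_notMem]
    intro x hx
    obtain ⟨p, hle, hp⟩ := Nat.exists_infinite_primes (x.natAbs + 1)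
    have hpz : Prime (p : ℤ) := Nat.prime_iff_prime_int.mp hp
    refine ⟨Ideal.span {(p : ℤ)}, ⟨bot_le, ?_⟩, ?_⟩
    · exact PrincipalIdealRing.isMaximal_of_irreducible hpz.irreducible
    · rw [Ideal.mem_span_singleton]
      intro hdvd
      have hx0 : x ≠ 0 := by simpa using hx
      have h1 := Nat.le_of_dvd (Int.natAbs_pos.mpr hx0) (Int.natCast_dvd.mp hdvd)
      omega
  · have := hP.isMaximal h0
    exact Ideal.jacobson_eq_self_of_isMaximal

/-- By the Nullstellensatz `K` is finite over `ℤ`. It cannot have characteristic zero, as `ℤ` would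
then be a field by integrality; so it is finite over some `ZMod p`. -/
theorem finite_of_finiteType_int (K : Type*) [Field K] [Algebra.FiniteType ℤ K] : Finite K := by
  have := isJacobsonRing_int
  have hfin : Module.Finite ℤ K := finite_of_finite_type_of_isJacobsonRing ℤ K
  obtain ⟨p, hp⟩ := CharP.exists K
  rcases CharP.char_is_prime_or_zero K p with hpp | rfl
  · have : NeZero p := ⟨hpp.ne_zero⟩
    let : Algebra (ZMod p) K := ZMod.algebra K p
    have : Module.Finite (ZMod p) K := Module.Finite.of_restrictScalars_finite ℤ (ZMod p) K
    exact Module.finite_of_finite (ZMod p)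
  · have : CharZero K := CharP.charP_to_charZero K
    exact absurd (isField_of_isIntegral_of_isField (R := ℤ) (S := K)
      (by simpa using Int.cast_injective) (Field.toIsField K)) Int.not_isField

theorem finite_quotient_of_isMaximal {A : Type*} [CommRing A] (hfg : Algebra.FiniteType ℤ A)
    (m : Ideal A) [hm : m.IsMaximal] : Finite (A ⧸ m) := by
  have : Algebra.FiniteType ℤ (A ⧸ m) :=
    hfg.of_surjective (Ideal.Quotient.mkₐ ℤ m) Ideal.Quotient.mk_surjective
  exact @finite_of_finiteType_int (A ⧸ m) (Ideal.Quotient.field m) this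

/-- Above a prime of residue characteristic zero there are two maximal ideals of different residue
characteristics: given one of residue characteristic `p`, the Jacobson property yields another one
not containing `p`. -/
theorem exists_two_maximal {A : Type*} [CommRing A] (hfg : Algebra.FiniteType ℤ A)
    (P : Ideal A) [hP : P.IsPrime] (hPn : ∀ n : ℕ, 1 ≤ n → (n : A) ∉ P) :
    ∃ m : Bool → Ideal A, (∀ i, (m i).IsMaximal ∧ P ≤ m i) ∧
      ∀ q : ℕ, q.Prime → ∃ i, (q : A) ∉ m i := by
  have := isJacobsonRing_int
  have hJ : IsJacobsonRing A := isJacobsonRing_of_finiteType (A := ℤ)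
  obtain ⟨m₁, hm₁, hle₁⟩ := Ideal.exists_le_maximal P hP.ne_top
  have := finite_quotient_of_isMaximal hfg m₁
  let := Ideal.Quotient.field m₁
  obtain ⟨p, hp⟩ := CharP.exists (A ⧸ m₁)
  have hpp : p.Prime := CharP.char_is_prime (A ⧸ m₁) p
  have hjac := Ideal.eq_jacobson_iff_notMem.mp (hJ.out hP.isRadical)
  obtain ⟨m₂, ⟨hle₂, hm₂⟩, hp₂⟩ := hjac (p : A) (hPn p hpp.one_le)
  refine ⟨fun b => if b then m₁ else m₂, ?_, ?_⟩
  · rintro (_ | _)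
    · exact ⟨hm₂, hle₂⟩
    · exact ⟨hm₁, hle₁⟩
  · intro q hq
    by_cases hqp : q = p
    · exact ⟨false, by simpa [hqp] using hp₂⟩
    · refine ⟨true, fun hmem => hqp ?_⟩
      have h0 : ((q : ℕ) : A ⧸ m₁) = 0 := by
        rw [← map_natCast (Ideal.Quotient.mk m₁)]
        exact Ideal.Quotient.eq_zero_iff_mem.mpr (by simpa using hmem)
      exact ((Nat.prime_dvd_prime_iff_eq hpp hq).mp ((CharP.cast_eq_zero_iff _ p q).mp h0)).symm

theorem natCast_notMem_minimalPrimes {A : Type*} [CommRing A]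
    (htf : ∀ (a : A) (n : ℕ), 1 ≤ n → n • a = 0 → a = 0)
    (P : Ideal A) (hP : P ∈ minimalPrimes A) (n : ℕ) (hn : 1 ≤ n) : (n : A) ∉ P := by
  intro hmem
  refine notMem_nonZeroDivisors_of_mem_mem_minimalPrimes hmem hP ?_
  rw [mem_nonZeroDivisors_iff_right]
  intro a ha
  exact htf a n hn (by rw [nsmul_eq_mul, mul_comm, ha])

/-- Krull's intersection theorem: an element `x` of all powers of `m` satisfies `(1 - r) x = 0` for
some `r ∈ m`, and `1 - r` lies outside every prime contained in `m`. -/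
theorem mem_of_forall_mem_pow {A : Type*} [CommRing A] [IsNoetherianRing A] (P m : Ideal A)
    [hP : P.IsPrime] (hm : m ≠ ⊤) (hle : P ≤ m) (x : A) (hx : ∀ n, x ∈ m ^ n) : x ∈ P := by
  have hx' : x ∈ (⨅ i : ℕ, m ^ i • ⊤ : Submodule A A) := by
    rw [Submodule.mem_iInf]
    intro i
    simpa using hx i
  obtain ⟨⟨r, hr⟩, hrx⟩ := (m.mem_iInf_smul_pow_eq_bot_iff x).mp hx'
  have hrx' : r * x = x := hrx
  have h0 : (1 - r) * x ∈ P := by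
    rw [sub_mul, one_mul, hrx', sub_self]
    exact P.zero_mem
  refine (hP.mem_or_mem h0).resolve_left fun h1 => hm ?_
  rw [Ideal.eq_top_iff_one]
  simpa using m.add_mem (hle h1) hr

/-! ### Congruence subgroups of the automorphism group -/

/-- The group of ring automorphisms of `A` that induce the identity on `A ⧸ I`. -/
def congruenceSubgroup {A : Type*} [CommRing A] (I : Ideal A) : Subgroup (A ≃+* A) where
  carrier := {h | ∀ a, h a - a ∈ I}
  one_mem' a := by simp
  mul_mem' {g h} hg hh a := by
    simpa using I.add_mem (hg (h a)) (hh a)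
  inv_mem' {h} hh a := by
    have h1 := I.neg_mem (hh (h⁻¹ a))
    have h2 : h (h⁻¹ a) = a := by rw [← RingAut.mul_apply, mul_inv_cancel, RingAut.one_apply]
    rwa [h2, neg_sub] at h1

/-- A ring homomorphism from `A` is determined by its values on a finite generating set. -/
theorem finite_ringHom {A B : Type*} [CommRing A] [CommRing B] (hfg : Algebra.FiniteType ℤ A)
    [Finite B] : Finite (A →+* B) := by
  obtain ⟨s, hs⟩ := hfg.out
  refine Finite.of_injective (fun (f : A →+* B) (x : s) => f x) fun f g hfg => ?_
  have : f.toIntAlgHom = g.toIntAlgHom := by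
    refine AlgHom.ext_of_adjoin_eq_top hs fun x hx => ?_
    exact congrFun hfg ⟨x, hx⟩
  ext a
  exact DFunLike.congr_fun this a

/-- Sending `g` to `a ↦ g⁻¹ a mod I` embeds the cosets of the congruence subgroup into the finite
set of ring homomorphisms `A → A ⧸ I`. -/
theorem congruenceSubgroup_index_ne_zero {A : Type*} [CommRing A] (hfg : Algebra.FiniteType ℤ A)
    (I : Ideal A) [Finite (A ⧸ I)] : (congruenceSubgroup I).index ≠ 0 := by
  have := finite_ringHom (B := A ⧸ I) hfg
  let F : (A ≃+* A) → (A →+* A ⧸ I) := fun g => (Ideal.Quotient.mk I).comp (g⁻¹ : A ≃+* A)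
  have hF : ∀ g h, F g = F h → g⁻¹ * h ∈ congruenceSubgroup I := by
    intro g h hgh a
    have h1 := DFunLike.congr_fun hgh (h a)
    have h2 : g⁻¹ (h a) - h⁻¹ (h a) ∈ I := Ideal.Quotient.eq.mp h1
    have h3 : h⁻¹ (h a) = a := by rw [← RingAut.mul_apply, inv_mul_cancel, RingAut.one_apply]
    rwa [h3] at h2
  have : Finite ((A ≃+* A) ⧸ congruenceSubgroup I) := by
    refine Finite.of_injective (fun c => F c.out) fun c d hcd => ?_
    have := QuotientGroup.eq.mpr (hF _ _ hcd)
    rwa [QuotientGroup.out_eq', QuotientGroup.out_eq'] at this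
  exact Subgroup.index_ne_zero_of_finite

/-! ### Torsion in congruence subgroups -/

/-- The difference `δ = h - 1` satisfies `δ (x y) = δ x * y + h x * δ y`, so it raises the `m`-adic
filtration degree by one on all of `A` as soon as it does so on `A` and on `m`. -/
theorem sub_mem_pow_succ {A : Type*} [CommRing A] (m : Ideal A) (h : A ≃+* A)
    (hh : ∀ a, h a - a ∈ m ^ 2) (k : ℕ) : ∀ a ∈ m ^ k, h a - a ∈ m ^ (k + 1) := by
  induction k with
  | zero =>
    intro a _
    exact Ideal.pow_le_pow_right (by norm_num) (hh a)
  | succ k ih =>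
    intro a ha
    rw [pow_succ'] at ha
    refine Submodule.mul_induction_on ha ?_ ?_
    · intro x hx y hy
      have e : h (x * y) - x * y = (h x - x) * y + h x * (h y - y) := by
        rw [map_mul]
        ring
      have hhx : h x ∈ m := by
        have h1 : h x - x ∈ m := Ideal.pow_le_self two_ne_zero (hh x)
        simpa using m.add_mem h1 hx
      rw [e]
      refine Ideal.add_mem _ ?_ ?_
      · have := Ideal.mul_mem_mul (hh x) hy
        rwa [← pow_add, show 2 + k = k + 1 + 1 by ring] at this
      · have := Ideal.mul_mem_mul hhx (ih y hy)
        rwa [← pow_succ'] at this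
    · intro x y hx hy
      have e : h (x + y) - (x + y) = (h x - x) + (h y - y) := by
        rw [map_add]
        ring
      rw [e]
      exact Ideal.add_mem _ hx hy

/-- An automorphism trivial modulo `m ^ 2` whose order is prime to the residue characteristic of `m`
is trivial modulo every power of `m`. -/
theorem sub_mem_pow_of_pow_eq_one {A : Type*} [CommRing A] (m : Ideal A) [hm : m.IsMaximal]
    (h : A ≃+* A) (hh : ∀ a, h a - a ∈ m ^ 2) (q : ℕ) (hq : (q : A) ∉ m) (hpow : h ^ q = 1)
    (n : ℕ) : ∀ a, h a - a ∈ m ^ n := by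
  induction n with
  | zero => simp
  | succ n ih =>
    intro a
    -- Modulo `m ^ (n + 1)` the iterates of `h` at `a` form an arithmetic progression.
    have key : ∀ i : ℕ, (h ^ i) a - a - i * (h a - a) ∈ m ^ (n + 1) := by
      intro i
      induction i with
      | zero => simp
      | succ i ihi =>
        have hd := sub_mem_pow_succ m h hh n ((h ^ i) a - a) ?_
        · have e : (h ^ (i + 1)) a - a - ((i + 1 : ℕ) : A) * (h a - a) =
              (h ((h ^ i) a - a) - ((h ^ i) a - a)) + ((h ^ i) a - a - i * (h a - a)) := by
            rw [pow_succ', RingAut.mul_apply, map_sub]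
            push_cast
            ring
          rw [e]
          exact Ideal.add_mem _ hd ihi
        · have := Ideal.add_mem _ (Ideal.pow_le_pow_right (Nat.le_succ n) ihi)
            (Ideal.mul_mem_left _ (i : A) (ih a))
          simpa using this
    have hqd : (q : A) * (h a - a) ∈ m ^ (n + 1) := by
      have := key q
      rw [hpow, RingAut.one_apply, sub_self, zero_sub] at this
      simpa using Ideal.neg_mem_iff _ |>.mp this
    -- `q` is a unit modulo `m ^ (n + 1)`, since it is one modulo `m`.
    have hcop : IsCoprime (Ideal.span {(q : A)}) (m ^ (n + 1)) := by
      refine IsCoprime.pow_right ?_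
      rw [Ideal.isCoprime_iff_sup_eq, sup_comm]
      exact hm.out.2 _ (lt_of_le_of_ne le_sup_left fun e => hq (by
        rw [e]
        exact Ideal.mem_sup_right (Ideal.mem_span_singleton_self _)))
    obtain ⟨x, hx, y, hy, hxy⟩ := Ideal.isCoprime_iff_exists.mp hcop
    obtain ⟨c, rfl⟩ := Ideal.mem_span_singleton'.mp hx
    have e : h a - a = c * ((q : A) * (h a - a)) + (h a - a) * y := by
      linear_combination -(h a - a) * hxy
    rw [e]
    exact Ideal.add_mem _ (Ideal.mul_mem_left _ _ hqd) (Ideal.mul_mem_left _ _ hy)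

/-- Lemma 2: Let `A` be a semiprime (reduced) finitely generated commutative ring
without additive torsion.  Then `Aut(A)` is virtually torsion free. -/
theorem stmt_8 (A : Type*) [CommRing A] [IsReduced A] (hfg : Algebra.FiniteType ℤ A)
    (htf : ∀ (a : A) (n : ℕ), 1 ≤ n → n • a = 0 → a = 0) :
    ∃ H : Subgroup (A ≃+* A), H.index ≠ 0 ∧ ∀ h ∈ H, IsOfFinOrder h → h = 1 := by
  have : IsNoetherianRing A := Algebra.FiniteType.isNoetherianRing ℤ A
  have : Finite (minimalPrimes A) := minimalPrimes.finite_of_isNoetherianRing A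
  have hprime : ∀ P : minimalPrimes A, P.1.IsPrime := fun P => P.2.1.1
  have hex := fun P : minimalPrimes A =>
    have := hprime P
    exists_two_maximal hfg P.1 (natCast_notMem_minimalPrimes htf P.1 P.2)
  choose m hm hq using hex
  refine ⟨⨅ x : minimalPrimes A × Bool, congruenceSubgroup (m x.1 x.2 ^ 2), ?_, ?_⟩
  · refine Subgroup.index_iInf_ne_zero fun x => ?_
    have := (hm x.1 x.2).1
    have := finite_quotient_of_isMaximal hfg (m x.1 x.2)
    have := Ideal.finite_quotient_pow (IsNoetherian.noetherian (m x.1 x.2)) 2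
    exact congruenceSubgroup_index_ne_zero hfg _
  · -- Elements of prime order are trivial, because `h - 1` maps into every minimal prime.
    have hprimeOrder : ∀ h ∈ ⨅ x : minimalPrimes A × Bool, congruenceSubgroup (m x.1 x.2 ^ 2),
        ∀ q : ℕ, q.Prime → h ^ q = 1 → h = 1 := by
      intro h hh q hqp hpow
      ext a
      rw [RingAut.one_apply, ← sub_eq_zero, ← Ideal.mem_bot]
      have hbot : sInf (minimalPrimes A) = (⊥ : Ideal A) := by
        have h1 : sInf (minimalPrimes A) = (⊥ : Ideal A).radical := Ideal.sInf_minimalPrimes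
        rw [h1]
        exact nilradical_eq_zero A
      rw [← hbot, Ideal.mem_sInf]
      intro P hP
      obtain ⟨i, hi⟩ := hq ⟨P, hP⟩ q hqp
      obtain ⟨hmax, hle⟩ := hm ⟨P, hP⟩ i
      have := hprime ⟨P, hP⟩
      refine mem_of_forall_mem_pow P _ hmax.ne_top hle _ fun n => ?_
      exact sub_mem_pow_of_pow_eq_one _ h ((Subgroup.mem_iInf.mp hh) (⟨P, hP⟩, i)) q hi hpow n a
    intro h hh hfin
    by_contra hne
    have h0 : orderOf h ≠ 0 := hfin.orderOf_pos.ne'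
    obtain ⟨q, hqp, hdvd⟩ := Nat.exists_prime_and_dvd (mt orderOf_eq_one_iff.mp hne)
    have hord : orderOf (h ^ (orderOf h / q)) = q := orderOf_pow_orderOf_div h0 hdvd
    have h1 := hprimeOrder _ (Subgroup.pow_mem _ hh (orderOf h / q)) q hqp
      (orderOf_dvd_iff_pow_eq_one.mp hord.dvd)
    rw [h1, orderOf_one] at hord
    exact hqp.ne_one hord.symm
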